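/- For every quantified Boolean formula Ψ in prenex normal form with quantifier-free part in conjunctive normal form, Ψ is true if and only if L_Ψ is not ST[3/2]-separable from L'_Ψ. -/

import Mathlib

open scoped Computability

/-! Infrastructure: the languages `L_Ψ, L'_Ψ` associated with a quantified Boolean
formula `Ψ = Qₙxₙ⋯Q₁x₁ φ` (prenex normal form, CNF matrix `φ`), following the
reduction of the paper.

* The alphabet `Bₙ` is the type `Letter n`: `pos j`/`neg j` are the letters
  `x_{j+1}`/`x̄_{j+1}` (variables are 0-indexed), `hash j` is `#_{j+1}` and `dollar`
  is `$`; `Bsub n i` is the sub-alphabet `B_i`.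
* A CNF formula `φ` is a list of clauses, a clause being a list of literals
  `(j, b) : Fin n × Bool` (`b = true` for `x_{j+1}`, `b = false` for `¬x_{j+1}`).
* Quantifiers are given by `Q : ℕ → Bool`, `Q i = true` meaning `Q_{i+1} = ∃` and
  `Q i = false` meaning `Q_{i+1} = ∀`.
* `QTruth n Q φ i v` is the truth value of `Ψ_i = Q_i x_i ⋯ Q₁x₁ φ` under the
  assignment of its free variables induced by `v`.
* `LL n Q φ i = (L_i, L'_i)`.
* An `i`-valuation `V` is determined by the assignment `v : Fin n → Bool` it induces
  on the variables `x_j, j > i`: `Val n i v` is the sub-alphabet `V` and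
  `ValLang n i v` is the language `[V]`. -/

/-- The alphabet `Bₙ`. -/
inductive Letter (n : ℕ) where
  | pos (j : Fin n)
  | neg (j : Fin n)
  | hash (j : Fin n)
  | dollar
deriving DecidableEq, Fintype

/-- The sub-alphabet `B_i ⊆ Bₙ` (`B₀ = X ∪ X̄`, and `B_i` adds `#₁, …, #_i, $`). -/
def Bsub (n : ℕ) (i : ℕ) : Set (Letter n) :=
  {l | match l with
    | .pos _ => True
    | .neg _ => True
    | .hash j => (j : ℕ) < i
    | .dollar => 0 < i}

/-- The single-letter language `{a}`. -/
def ltr {n : ℕ} (a : Letter n) : Language (Letter n) := {w | w = [a]}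

/-- The language `S*` for a sub-alphabet `S`. -/
def alphStar {n : ℕ} (S : Set (Letter n)) : Language (Letter n) :=
  {w | ∀ a ∈ w, a ∈ S}

/-- The language `C_j` associated with a clause: `C_j ⊆ B₀` contains `x` (resp. `x̄`)
iff `x` (resp. `¬x`) is a literal of the clause, viewed as a language of
single-letter words. -/
def clauseLang (n : ℕ) (c : List (Fin n × Bool)) : Language (Letter n) :=
  {w | ∃ p ∈ c, w = [if p.2 then Letter.pos p.1 else Letter.neg p.1]}

/-- Truth of `Ψ_i = Q_i x_i ⋯ Q₁ x₁ φ` under the assignment `v` of its free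
variables. -/
def QTruth (n : ℕ) (Q : ℕ → Bool) (φ : List (List (Fin n × Bool))) :
    ℕ → (Fin n → Bool) → Prop
  | 0, v => ∀ c ∈ φ, ∃ p ∈ c, v p.1 = p.2
  | i + 1, v =>
      if h : i < n then
        (if Q i then ∃ b : Bool, QTruth n Q φ i (Function.update v ⟨i, h⟩ b)
        else ∀ b : Bool, QTruth n Q φ i (Function.update v ⟨i, h⟩ b))
      else True

/-- The pair of languages `(L_i, L'_i)` of the reduction. -/
def LL (n : ℕ) (Q : ℕ → Bool) (φ : List (List (Fin n × Bool))) :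
    ℕ → Language (Letter n) × Language (Letter n)
  | 0 => (alphStar (Bsub n 0), (φ.map (clauseLang n)).prod)
  | i + 1 =>
      if h : i < n then
        let j : Fin n := ⟨i, h⟩
        -- `(x_{i+1} + x̄_{i+1})`
        let X2 : Language (Letter n) := {w | w = [Letter.pos j] ∨ w = [Letter.neg j]}
        let hashL := ltr (Letter.hash j)
        let dolL := ltr (Letter.dollar : Letter n)
        -- `T_{i+1} = (#_{i+1} x_{i+1} (B_i ∖ {x̄_{i+1}})* $ x_{i+1})*`
        let Ti : Language (Letter n) :=
          (hashL * ltr (Letter.pos j) *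
            alphStar {a | a ∈ Bsub n i ∧ a ≠ Letter.neg j} * dolL *
            ltr (Letter.pos j))∗
        -- `T̄_{i+1} = (#_{i+1} x̄_{i+1} (B_i ∖ {x_{i+1}})* $ x̄_{i+1})*`
        let Tbar : Language (Letter n) :=
          (hashL * ltr (Letter.neg j) *
            alphStar {a | a ∈ Bsub n i ∧ a ≠ Letter.pos j} * dolL *
            ltr (Letter.neg j))∗
        -- `L_{i+1} = (#(x+x̄)L_i$(x+x̄))* #`
        let Li : Language (Letter n) :=
          (hashL * X2 * (LL n Q φ i).1 * dolL * X2)∗ * hashL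
        -- `L'_{i+1}`, depending on the quantifier `Q_{i+1}`
        let Li' : Language (Letter n) :=
          if Q i then
            (hashL * X2 * (LL n Q φ i).2 * dolL * X2)∗ * hashL * dolL *
              (Ti * hashL + Tbar * hashL)
          else
            Tbar * hashL * dolL *
              (hashL * X2 * (LL n Q φ i).2 * dolL * X2)∗ * hashL * dolL *
              Ti * hashL
        (Li, Li')
      else (⊥, ⊥)

/-- The sub-alphabet `V ⊆ B_i` given by the `i`-valuation inducing the truth
assignment `v` on the variables `x_j, j > i`. -/
def Val (n : ℕ) (i : ℕ) (v : Fin n → Bool) : Set (Letter n) :=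
  {l | match l with
    | .pos j => (j : ℕ) < i ∨ v j = true
    | .neg j => (j : ℕ) < i ∨ v j = false
    | .hash j => (j : ℕ) < i
    | .dollar => 0 < i}

/-- The language `[V] ⊆ V*` of the words containing, for every `j > i`, at least one
of the letters `x_j, x̄_j`. -/
def ValLang (n : ℕ) (i : ℕ) (v : Fin n → Bool) : Language (Letter n) :=
  {w | (∀ a ∈ w, a ∈ Val n i v) ∧
    ∀ j : Fin n, i ≤ (j : ℕ) → (Letter.pos j ∈ w ∨ Letter.neg j ∈ w)}

/-- A class of languages: to every alphabet it associates a set of languages. -/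
abbrev LangClass : Type 1 := ∀ A : Type, Set (Language A)

/-- Boolean closure: the least set of languages containing `S` and closed under
Boolean operations (union, intersection, complement). -/
inductive BoolClosure {A : Type} (S : Set (Language A)) : Language A → Prop
  | base {L : Language A} : L ∈ S → BoolClosure S L
  | compl {L : Language A} : BoolClosure S L → BoolClosure S Lᶜ
  | union {K L : Language A} : BoolClosure S K → BoolClosure S L → BoolClosure S (K ⊔ L)
  | inter {K L : Language A} : BoolClosure S K → BoolClosure S L → BoolClosure S (K ⊓ L)

/-- Polynomial closure: the least set of languages containing `S` and closed under
finite union and marked concatenation `K a L`. -/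
inductive PolClosure {A : Type} (S : Set (Language A)) : Language A → Prop
  | base {L : Language A} : L ∈ S → PolClosure S L
  | union {K L : Language A} : PolClosure S K → PolClosure S L → PolClosure S (K ⊔ L)
  | marked {K L : Language A} (a : A) :
      PolClosure S K → PolClosure S L → PolClosure S (K * {[a]} * L)

/-- Level `k/2` of the concatenation hierarchy of basis `C` (levels are counted in
half units: index `k` is level `k/2`, so `C[0] = C`, `C[n + 1/2] = Pol(C[n])` and
`C[n + 1] = Bool(C[n + 1/2])`). -/
def hlevel (C : LangClass) : ℕ → LangClass
  | 0 => C
  | k + 1 => fun A =>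
      if k % 2 = 0 then {L | PolClosure (hlevel C k A) L}
      else {L | BoolClosure (hlevel C k A) L}

/-- The basis of the Straubing-Thérien hierarchy: `ST[0](A) = {∅, A*}`. -/
def STbasis : LangClass := fun A => {(⊥ : Language A), (⊤ : Language A)}

/-- `L₁` is `𝒞`-separable from `L₂`: some `K ∈ 𝒞` includes `L₁` and is disjoint
from `L₂`. -/
def Separable {A : Type} (𝒞 : Set (Language A)) (L₁ L₂ : Language A) : Prop :=
  ∃ K ∈ 𝒞, L₁ ≤ K ∧ L₂ ⊓ K = ⊥

/-! Level `3/2` fails to separate `L` from `L'` exactly when at every rank `m` some `u ∈ L` lies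
below some `u' ∈ L'` for the canonical preorder `PolLE m`; Arfi's theorem on intersections makes the
up-sets of this preorder languages of level `3/2`. By induction on `i`, the formula `Ψ_i` is true
under `v` if and only if such words `u ∈ L_i` and `u' ∈ L'_i` exist at every rank with `u` over the
alphabet `V` of the valuation.

If `Ψ_{i+1}` is true, related words `e, e'` at level `i` give related words `(#e)^{2p}` and
`(#e')^p #$ (#e)^p` at level `i + 1`: for large `p` a power of `#e` may be interrupted by any word
over its own letters.

Conversely, let `b` be the value assigned by a factor `T` or `T̄` of `u'`, and let `q` be the letter
of the opposite literal. Put a `q` in front of both words and cut `u` at the first `#` after its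
last `q`. The matching cut of `u'` is at the first `#` after its last `q` as well. Up to reversing
the words, this `#` precedes a block of the factor built from `L'_i`, or else the letter `$`. As `$`
does not start a block of `L_i`, a block of `u` without `q` lies below a block of `L'_i`, which is
the situation of level `i` with value `b`. -/

/-! ### The canonical preorder of level `3/2` -/

section PolLE

variable {A : Type*}

theorem append_eq_append_cons_iff {x y u v : List A} {a : A} :
    x ++ y = u ++ a :: v ↔
      (∃ r, x = u ++ a :: r ∧ v = r ++ y) ∨ ∃ r, u = x ++ r ∧ y = r ++ a :: v := by
  constructor
  · rw [List.append_eq_append_iff]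
    rintro (⟨r, rfl, rfl⟩ | ⟨r, rfl, h⟩)
    · exact .inr ⟨r, rfl, rfl⟩
    · rcases List.cons_eq_append_iff.1 h with ⟨rfl, rfl⟩ | ⟨r', rfl, rfl⟩
      · exact .inr ⟨[], by simp, rfl⟩
      · exact .inl ⟨r', rfl, rfl⟩
  · rintro (⟨r, rfl, rfl⟩ | ⟨r, rfl, rfl⟩) <;> simp

theorem cons_sublist_append_cons_iff {s u v : List A} {a : A} (hu : a ∉ u) :
    (a :: s).Sublist (u ++ a :: v) ↔ s.Sublist v := by
  refine ⟨fun h ↦ ?_, fun h ↦ (List.Sublist.cons_cons a h).trans (List.sublist_append_right u _)⟩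
  obtain ⟨s₁, s₂, hs, h₁, h₂⟩ := List.sublist_append_iff.1 h
  rcases List.cons_eq_append_iff.1 hs with ⟨rfl, rfl⟩ | ⟨r, rfl, -⟩
  · exact List.cons_sublist_cons.1 h₂
  · exact absurd (h₁.subset List.mem_cons_self) hu

/-- The canonical preorder of rank `m` for level `3/2`: `v` only has letters of `u`, and if
`m > 0` every factorization `u = u₁ a u₂` is matched by a factorization `v = v₁ a v₂` whose
two factors are related to `u₁` and `u₂` at rank `m - 1`. -/
def PolLE : ℕ → List A → List A → Prop
  | 0, u, v => v ⊆ u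
  | m + 1, u, v => v ⊆ u ∧ ∀ u₁ a u₂, u = u₁ ++ a :: u₂ →
      ∃ v₁ v₂, v = v₁ ++ a :: v₂ ∧ PolLE m u₁ v₁ ∧ PolLE m u₂ v₂

namespace PolLE

variable {m : ℕ} {u v w u' v' s : List A} {a : A}

theorem subset (h : PolLE m u v) : v ⊆ u := by
  cases m with
  | zero => exact h
  | succ m => exact h.1

theorem split (h : PolLE (m + 1) (u ++ a :: u') v) :
    ∃ v₁ v₂, v = v₁ ++ a :: v₂ ∧ PolLE m u v₁ ∧ PolLE m u' v₂ :=
  h.2 u a u' rfl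

theorem of_succ (h : PolLE (m + 1) u v) : PolLE m u v := by
  induction m generalizing u v with
  | zero => exact h.1
  | succ m ih =>
    refine ⟨h.1, ?_⟩
    rintro u₁ a u₂ rfl
    obtain ⟨v₁, v₂, rfl, h₁, h₂⟩ := h.split
    exact ⟨v₁, v₂, rfl, ih h₁, ih h₂⟩

theorem of_le {k : ℕ} (hk : k ≤ m) (h : PolLE m u v) : PolLE k u v := by
  induction hk with
  | refl => exact h
  | step _ ih => exact ih h.of_succ

theorem refl (m : ℕ) (u : List A) : PolLE m u u := by
  induction m generalizing u with
  | zero => exact List.Subset.refl u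
  | succ m ih => exact ⟨List.Subset.refl u, fun u₁ _ u₂ hu ↦ ⟨u₁, u₂, hu, ih u₁, ih u₂⟩⟩

theorem trans (h : PolLE m u v) (h' : PolLE m v w) : PolLE m u w := by
  induction m generalizing u v w with
  | zero => exact List.Subset.trans h' h
  | succ m ih =>
    refine ⟨List.Subset.trans h'.1 h.1, ?_⟩
    rintro u₁ a u₂ rfl
    obtain ⟨v₁, v₂, rfl, h₁, h₂⟩ := h.split
    obtain ⟨w₁, w₂, rfl, h₁', h₂'⟩ := h'.split
    exact ⟨w₁, w₂, rfl, ih h₁ h₁', ih h₂ h₂'⟩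

theorem append (h : PolLE m u v) (h' : PolLE m u' v') : PolLE m (u ++ u') (v ++ v') := by
  induction m generalizing u v u' v' with
  | zero => exact List.append_subset.2 ⟨List.subset_append_of_subset_left u' h,
      List.subset_append_of_subset_right u h'⟩
  | succ m ih =>
    refine ⟨List.append_subset.2 ⟨List.subset_append_of_subset_left u' h.1,
      List.subset_append_of_subset_right u h'.1⟩, fun x a y hxy ↦ ?_⟩
    rcases append_eq_append_cons_iff.1 hxy with ⟨r, rfl, rfl⟩ | ⟨r, rfl, rfl⟩
    · obtain ⟨v₁, v₂, rfl, h₁, h₂⟩ := h.split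
      exact ⟨v₁, v₂ ++ v', by simp, h₁, ih h₂ h'.of_succ⟩
    · obtain ⟨v₁, v₂, rfl, h₁, h₂⟩ := h'.split
      exact ⟨v ++ v₁, v₂, by simp, ih h.of_succ h₁, h₂⟩

theorem reverse (h : PolLE m u v) : PolLE m u.reverse v.reverse := by
  induction m generalizing u v with
  | zero => simpa [PolLE, List.subset_def] using h
  | succ m ih =>
    refine ⟨by simpa [List.subset_def] using h.1, fun x a y hxy ↦ ?_⟩
    obtain rfl : u = y.reverse ++ a :: x.reverse := by
      rw [← u.reverse_reverse, hxy]
      simp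
    obtain ⟨v₁, v₂, rfl, h₁, h₂⟩ := h.split
    exact ⟨v₂.reverse, v₁.reverse, by simp, by simpa using ih h₂, by simpa using ih h₁⟩

theorem of_cons (h : PolLE (m + 1) (a :: u) v) : ∃ v', v = a :: v' ∧ PolLE m u v' := by
  obtain ⟨v₁, v₂, rfl, h₁, h₂⟩ := PolLE.split (u := []) h
  obtain rfl : v₁ = [] := List.subset_nil.1 h₁.subset
  exact ⟨v₂, rfl, h₂⟩

theorem of_concat (h : PolLE (m + 1) (u ++ [a]) v) : ∃ v', v = v' ++ [a] ∧ PolLE m u v' := by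
  obtain ⟨v₁, v₂, rfl, h₁, h₂⟩ := h.split
  obtain rfl : v₂ = [] := List.subset_nil.1 h₂.subset
  exact ⟨v₁, rfl, h₁⟩

theorem sublist_iff (hs : s.length ≤ m) (h : PolLE m u v) : s.Sublist u ↔ s.Sublist v := by
  induction s generalizing m u v with
  | nil => simp
  | cons a s ih =>
    obtain ⟨m, rfl⟩ : ∃ k, m = k + 1 := Nat.exists_eq_succ_of_ne_zero (by simp at hs; lia)
    have hs' : s.length ≤ m := by simpa using hs
    constructor
    · intro hu
      obtain ⟨r₁, r₂, rfl, ha, hr⟩ := List.cons_sublist_iff.1 hu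
      obtain ⟨x, y, rfl⟩ := List.append_of_mem ha
      rw [List.append_assoc, List.cons_append] at h
      obtain ⟨v₁, v₂, rfl, -, h₂⟩ := h.split
      have hv₂ := (ih hs' h₂).1 (hr.trans (List.sublist_append_right y r₂))
      exact (hv₂.cons_cons a).trans (List.sublist_append_right v₁ _)
    · intro hv
      have ha : a ∈ u := h.subset (hv.subset List.mem_cons_self)
      obtain ⟨u₁, u₂, rfl, hu₁⟩ := List.eq_append_cons_of_mem ha
      obtain ⟨v₁, v₂, rfl, h₁, h₂⟩ := h.split
      rw [cons_sublist_append_cons_iff (fun hav ↦ hu₁ (h₁.subset hav)), ← ih hs' h₂] at hv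
      exact (cons_sublist_append_cons_iff hu₁).2 hv

end PolLE

end PolLE

/-! ### Pumping -/

section WordPow

variable {A : Type*}

/-- The power `e^q` of a word. -/
def wordPow (e : List A) (q : ℕ) : List A := (List.replicate q e).flatten

variable {e t u v : List A} {a : A} {m q : ℕ}

theorem wordPow_zero (e : List A) : wordPow e 0 = [] := rfl

theorem wordPow_succ (e : List A) (q : ℕ) : wordPow e (q + 1) = e ++ wordPow e q := by
  rw [wordPow, List.replicate_succ, List.flatten_cons, wordPow]

theorem wordPow_add (e : List A) (p q : ℕ) : wordPow e (p + q) = wordPow e p ++ wordPow e q := by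
  simp only [wordPow, List.replicate_add, List.flatten_append]

theorem wordPow_subset (e : List A) (q : ℕ) : wordPow e q ⊆ e := by
  intro a ha
  obtain ⟨l, hl, hal⟩ := List.mem_flatten.1 ha
  exact List.eq_of_mem_replicate hl ▸ hal

theorem subset_wordPow (hq : 1 ≤ q) : e ⊆ wordPow e q := by
  obtain ⟨q, rfl⟩ := Nat.exists_eq_add_of_le' hq
  exact wordPow_succ e q ▸ List.subset_append_left _ _

theorem exists_of_wordPow_eq_append_cons (h : wordPow e q = u ++ a :: v) :
    ∃ j l e₁ e₂, q = j + (l + 1) ∧ e = e₁ ++ a :: e₂ ∧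
      u = wordPow e j ++ e₁ ∧ v = e₂ ++ wordPow e l := by
  induction q generalizing u with
  | zero => simp [wordPow_zero] at h
  | succ q ih =>
    rw [wordPow_succ] at h
    rcases append_eq_append_cons_iff.1 h with ⟨r, he, rfl⟩ | ⟨r, rfl, hr⟩
    · exact ⟨0, q, u, r, (Nat.zero_add _).symm, he, rfl, rfl⟩
    · obtain ⟨j, l, e₁, e₂, rfl, he, rfl, rfl⟩ := ih hr
      exact ⟨j + 1, l, e₁, e₂, by lia, he, by rw [wordPow_succ, List.append_assoc], rfl⟩

theorem wordPow_add_succ {e₁ e₂ : List A} (he : e = e₁ ++ a :: e₂) (j l : ℕ) :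
    wordPow e (j + (l + 1)) = (wordPow e j ++ e₁) ++ a :: (e₂ ++ wordPow e l) := by
  rw [wordPow_add, wordPow_succ]
  nth_rewrite 2 [he]
  simp only [List.append_assoc, List.cons_append]

theorem PolLE.wordPow_congr (h : PolLE m u v) (q : ℕ) : PolLE m (wordPow u q) (wordPow v q) := by
  induction q with
  | zero => exact PolLE.refl m _
  | succ q ih => simpa only [wordPow_succ] using h.append ih

/-- At rank `m`, a power `e^q` of exponent at least `p` lies below any other such power, even
after the insertion of a word over the letters of `e` with at least `p` factors `e` on each side. -/
def PumpsAt (A : Type*) (m p : ℕ) : Prop :=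
  ∀ ⦃e t : List A⦄, t ⊆ e → ∀ ⦃q r₁ r₂ : ℕ⦄, p ≤ q → p ≤ r₁ → p ≤ r₂ →
    PolLE m (wordPow e q) (wordPow e r₁ ++ t ++ wordPow e r₂)

namespace PumpsAt

variable {p : ℕ}

theorem zero : PumpsAt A 0 1 := by
  intro e t ht q r₁ r₂ hq _ _
  have h : wordPow e r₁ ++ t ++ wordPow e r₂ ⊆ e := List.append_subset.2
    ⟨List.append_subset.2 ⟨wordPow_subset e r₁, ht⟩, wordPow_subset e r₂⟩
  exact List.Subset.trans h (subset_wordPow hq)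

theorem exists_le_polLE_wordPow (hp : PumpsAt A m p) (e : List A) (j : ℕ) :
    ∃ j' ≤ 2 * p, PolLE m (wordPow e j) (wordPow e j') := by
  rcases le_total j p with hj | hj
  · exact ⟨j, by lia, PolLE.refl m _⟩
  · refine ⟨p + p, by lia, ?_⟩
    simpa [wordPow_add] using hp (List.nil_subset e) hj le_rfl le_rfl

theorem succ (hp : PumpsAt A m p) : PumpsAt A (m + 1) (3 * p + 1) := by
  intro e t ht q r₁ r₂ hq h₁ h₂
  refine ⟨(hp ht (by lia) (by lia) (by lia) : PolLE m (wordPow e q) _).subset, fun u a v huv ↦ ?_⟩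
  obtain ⟨j, l, e₁, e₂, rfl, he, rfl, rfl⟩ := exists_of_wordPow_eq_append_cons huv
  rcases le_or_gt p l with hl | hl
  · obtain ⟨j', hj', hjj'⟩ := hp.exists_le_polLE_wordPow e j
    obtain ⟨d, rfl⟩ : ∃ d, r₁ = j' + (d + 1) := ⟨r₁ - 1 - j', by lia⟩
    refine ⟨wordPow e j' ++ e₁, e₂ ++ (wordPow e d ++ t ++ wordPow e r₂), ?_,
      hjj'.append (.refl m e₁), (PolLE.refl m e₂).append (hp ht hl (by lia) (by lia))⟩
    rw [wordPow_add_succ he]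
    simp only [List.append_assoc, List.cons_append]
  · obtain ⟨d, rfl⟩ : ∃ d, r₂ = d + (l + 1) := ⟨r₂ - 1 - l, by lia⟩
    refine ⟨(wordPow e r₁ ++ t ++ wordPow e d) ++ e₁, e₂ ++ wordPow e l, ?_,
      (hp ht (by lia) (by lia) (by lia)).append (.refl m e₁), .refl m _⟩
    rw [wordPow_add_succ he]
    simp only [List.append_assoc]

theorem polLE_insert {e₁ e₂ : List A} (hp : PumpsAt A m p) (h₁ : PolLE m e e₁)
    (h₂ : PolLE m e e₂) (ht : t ⊆ e) :
    PolLE m (wordPow e (p + p)) (wordPow e₁ p ++ t ++ wordPow e₂ p) :=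
  PolLE.trans (hp ht (by lia) le_rfl le_rfl)
    (((h₁.wordPow_congr p).append (.refl m t)).append (h₂.wordPow_congr p))

end PumpsAt

theorem exists_pumpsAt (A : Type*) (m : ℕ) : ∃ p, PumpsAt A m p := by
  induction m with
  | zero => exact ⟨1, PumpsAt.zero⟩
  | succ m ih => exact ih.imp' _ fun _ hp ↦ hp.succ

end WordPow

/-! ### Invariance of the languages of level `3/2` -/

section Invariance

variable {A : Type} {L : Language A}

theorem mem_marked {K L : Language A} {a : A} {w : List A} :
    w ∈ K * {[a]} * L ↔ ∃ u ∈ K, ∃ v ∈ L, w = u ++ a :: v := by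
  constructor
  · rintro ⟨_, ⟨u, hu, _, rfl, rfl⟩, v, hv, rfl⟩
    exact ⟨u, hu, v, hv, by simp⟩
  · rintro ⟨u, hu, v, hv, rfl⟩
    exact ⟨u ++ [a], ⟨u, hu, [a], rfl, rfl⟩, v, hv, by simp⟩

theorem hlevel_STbasis_three (A : Type) :
    hlevel STbasis 3 A =
      {L | PolClosure {L | BoolClosure {L | PolClosure {⊥, ⊤} L} L} L} := by
  simp [hlevel, STbasis]

theorem append_cons_sublist_iff {s t w : List A} {a : A} :
    (s ++ a :: t).Sublist w ↔ ∃ u v, w = u ++ a :: v ∧ s.Sublist u ∧ t.Sublist v := by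
  constructor
  · intro h
    obtain ⟨r₁, r₂, rfl, h₁, h₂⟩ := List.append_sublist_iff.1 h
    obtain ⟨x, y, rfl, ha, hy⟩ := List.cons_sublist_iff.1 h₂
    obtain ⟨x₁, x₂, rfl⟩ := List.append_of_mem ha
    exact ⟨r₁ ++ x₁, x₂ ++ y, by simp, h₁.trans (List.sublist_append_left r₁ x₁),
      hy.trans (List.sublist_append_right x₂ y)⟩
  · rintro ⟨u, v, rfl, hs, ht⟩
    exact hs.append (ht.cons_cons a)

theorem exists_subwords_of_polClosure_trivial (hL : PolClosure {⊥, ⊤} L) :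
    ∃ (S : Set (List A)) (k : ℕ), (∀ s ∈ S, s.length ≤ k) ∧
      ∀ w, w ∈ L ↔ ∃ s ∈ S, s.Sublist w := by
  induction hL with
  | base h =>
    rcases h with rfl | rfl
    · exact ⟨∅, 0, by simp, fun w ↦ iff_of_false (Set.notMem_empty w) (by simp)⟩
    · exact ⟨{[]}, 0, by simp, fun w ↦ iff_of_true (Set.mem_univ w) (by simp)⟩
  | union _ _ ih₁ ih₂ =>
    obtain ⟨S₁, k₁, hS₁, h₁⟩ := ih₁
    obtain ⟨S₂, k₂, hS₂, h₂⟩ := ih₂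
    refine ⟨S₁ ∪ S₂, max k₁ k₂, ?_, fun w ↦ ?_⟩
    · rintro s (hs | hs)
      · exact le_max_of_le_left (hS₁ s hs)
      · exact le_max_of_le_right (hS₂ s hs)
    · simp only [Set.mem_union, or_and_right, exists_or, ← h₁, ← h₂]
      rfl
  | marked a _ _ ih₁ ih₂ =>
    obtain ⟨S₁, k₁, hS₁, h₁⟩ := ih₁
    obtain ⟨S₂, k₂, hS₂, h₂⟩ := ih₂
    refine ⟨Set.image2 (fun s t ↦ s ++ a :: t) S₁ S₂, k₁ + k₂ + 1, ?_, fun w ↦ ?_⟩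
    · rintro _ ⟨s, hs, t, ht, rfl⟩
      simp only [List.length_append, List.length_cons]
      grind
    · simp only [mem_marked, h₁, h₂, Set.exists_mem_image2, append_cons_sublist_iff]
      grind

theorem exists_polLE_mem_iff_of_boolClosure
    (hL : BoolClosure {L | PolClosure {⊥, ⊤} L} L) :
    ∃ m, ∀ u v, PolLE m u v → (u ∈ L ↔ v ∈ L) := by
  induction hL with
  | base h =>
    obtain ⟨S, k, hS, hL⟩ := exists_subwords_of_polClosure_trivial h
    refine ⟨k, fun u v huv ↦ ?_⟩
    rw [hL, hL]
    exact exists_congr fun s ↦ and_congr_right fun hs ↦ huv.sublist_iff (hS s hs)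
  | compl _ ih => exact ih.imp fun m h u v huv ↦ not_congr (h u v huv)
  | union _ _ ih₁ ih₂ =>
    obtain ⟨m₁, h₁⟩ := ih₁
    obtain ⟨m₂, h₂⟩ := ih₂
    exact ⟨max m₁ m₂, fun u v huv ↦ or_congr (h₁ u v (huv.of_le (le_max_left m₁ m₂)))
      (h₂ u v (huv.of_le (le_max_right m₁ m₂)))⟩
  | inter _ _ ih₁ ih₂ =>
    obtain ⟨m₁, h₁⟩ := ih₁
    obtain ⟨m₂, h₂⟩ := ih₂
    exact ⟨max m₁ m₂, fun u v huv ↦ and_congr (h₁ u v (huv.of_le (le_max_left m₁ m₂)))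
      (h₂ u v (huv.of_le (le_max_right m₁ m₂)))⟩

theorem exists_polLE_mem_of_polClosure
    (hL : PolClosure {L | BoolClosure {L | PolClosure {⊥, ⊤} L} L} L) :
    ∃ m, ∀ u v, PolLE m u v → u ∈ L → v ∈ L := by
  induction hL with
  | base h => exact (exists_polLE_mem_iff_of_boolClosure h).imp fun m hm u v huv ↦ (hm u v huv).1
  | union _ _ ih₁ ih₂ =>
    obtain ⟨m₁, h₁⟩ := ih₁
    obtain ⟨m₂, h₂⟩ := ih₂
    exact ⟨max m₁ m₂, fun u v huv ↦ Or.imp (h₁ u v (huv.of_le (le_max_left m₁ m₂)))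
      (h₂ u v (huv.of_le (le_max_right m₁ m₂)))⟩
  | marked a _ _ ih₁ ih₂ =>
    obtain ⟨m₁, h₁⟩ := ih₁
    obtain ⟨m₂, h₂⟩ := ih₂
    refine ⟨max m₁ m₂ + 1, fun u v huv hu ↦ ?_⟩
    obtain ⟨u₁, hu₁, u₂, hu₂, rfl⟩ := mem_marked.1 hu
    obtain ⟨v₁, v₂, rfl, huv₁, huv₂⟩ := huv.split
    exact mem_marked.2 ⟨v₁, h₁ _ _ (huv₁.of_le (le_max_left m₁ m₂)) hu₁,
      v₂, h₂ _ _ (huv₂.of_le (le_max_right m₁ m₂)) hu₂, rfl⟩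

end Invariance

/-! ### Intersections of marked products -/

section Splittings

variable {A : Type} {S P : Set (Language A)} {K L : Language A} {a : A}

/-- The factorizations `u a v` of the words of `L` are those in finitely many products of two
languages of `S`. -/
def HasSplittings (S : Set (Language A)) (a : A) (L : Language A) : Prop :=
  ∃ T : Set (Language A × Language A), T.Finite ∧ T ⊆ S ×ˢ S ∧
    ∀ u v, u ++ a :: v ∈ L ↔ ∃ p ∈ T, u ∈ p.1 ∧ v ∈ p.2

theorem append_cons_mem_marked {K L : Language A} {b : A} {u v : List A} :
    u ++ a :: v ∈ K * {[b]} * L ↔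
      (∃ x ∈ K, ∃ r, u = x ++ b :: r ∧ r ++ a :: v ∈ L) ∨
      (u ∈ K ∧ a = b ∧ v ∈ L) ∨ ∃ r, u ++ a :: r ∈ K ∧ ∃ y ∈ L, v = r ++ b :: y := by
  rw [mem_marked]
  constructor
  · rintro ⟨x, hx, y, hy, hxy⟩
    rcases append_eq_append_cons_iff.1 hxy with ⟨r, rfl, rfl⟩ | ⟨r, rfl, hr⟩
    · exact .inl ⟨x, hx, r, rfl, hy⟩
    · rcases List.cons_eq_append_iff.1 hr with ⟨rfl, hy'⟩ | ⟨r, rfl, rfl⟩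
      · obtain ⟨rfl, rfl⟩ := List.cons.inj hy'
        exact .inr (.inl ⟨by simpa using hx, rfl, hy⟩)
      · exact .inr (.inr ⟨r, hx, y, hy, rfl⟩)
  · rintro (⟨x, hx, r, rfl, hr⟩ | ⟨hu, rfl, hv⟩ | ⟨r, hr, y, hy, rfl⟩)
    · exact ⟨x, hx, r ++ a :: v, hr, by simp⟩
    · exact ⟨u, hu, v, hv, rfl⟩
    · exact ⟨u ++ a :: r, hr, y, hy, by simp⟩

namespace HasSplittings

theorem union (hK : HasSplittings S a K) (hL : HasSplittings S a L) :
    HasSplittings S a (K ⊔ L) := by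
  obtain ⟨T₁, hfin₁, hT₁, h₁⟩ := hK
  obtain ⟨T₂, hfin₂, hT₂, h₂⟩ := hL
  refine ⟨T₁ ∪ T₂, hfin₁.union hfin₂, Set.union_subset hT₁ hT₂, fun u v ↦ ?_⟩
  simp only [Set.mem_union, or_and_right, exists_or, ← h₁, ← h₂]
  rfl

theorem marked {b : A} (hmarked : ∀ K ∈ S, ∀ L ∈ S, K * {[b]} * L ∈ S) (hKS : K ∈ S) (hLS : L ∈ S)
    (hK : HasSplittings S a K) (hL : HasSplittings S a L) :
    HasSplittings S a (K * {[b]} * L) := by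
  obtain ⟨T₁, hfin₁, hT₁, h₁⟩ := hK
  obtain ⟨T₂, hfin₂, hT₂, h₂⟩ := hL
  refine ⟨(fun p ↦ (K * {[b]} * p.1, p.2)) '' T₂ ∪ ({p | p = (K, L) ∧ a = b} ∪
    (fun p ↦ (p.1, p.2 * {[b]} * L)) '' T₁), ?_, ?_, fun u v ↦ ?_⟩
  · exact (hfin₂.image _).union (((Set.finite_singleton (K, L)).subset fun p hp ↦ hp.1).union
      (hfin₁.image _))
  · rintro _ (⟨p, hp, rfl⟩ | ⟨rfl, -⟩ | ⟨p, hp, rfl⟩)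
    · exact ⟨hmarked K hKS _ (hT₂ hp).1, (hT₂ hp).2⟩
    · exact ⟨hKS, hLS⟩
    · exact ⟨(hT₁ hp).1, hmarked _ (hT₁ hp).2 L hLS⟩
  · simp only [append_cons_mem_marked (a := a), h₁, h₂]
    constructor
    · rintro (⟨x, hx, r, rfl, p, hp, hr, hv⟩ | ⟨hu, rfl, hv⟩ | ⟨r, ⟨p, hp, hu, hr⟩, y, hy, rfl⟩)
      · exact ⟨_, .inl ⟨p, hp, rfl⟩, mem_marked.2 ⟨x, hx, r, hr, rfl⟩, hv⟩
      · exact ⟨(K, L), .inr (.inl ⟨rfl, rfl⟩), hu, hv⟩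
      · exact ⟨_, .inr (.inr ⟨p, hp, rfl⟩), hu, mem_marked.2 ⟨r, hr, y, hy, rfl⟩⟩
    · rintro ⟨_, ⟨p, hp, rfl⟩ | ⟨rfl, hab⟩ | ⟨p, hp, rfl⟩, hu, hv⟩
      · obtain ⟨x, hx, r, hr, rfl⟩ := mem_marked.1 hu
        exact .inl ⟨x, hx, r, rfl, p, hp, hr, hv⟩
      · exact .inr (.inl ⟨hu, hab, hv⟩)
      · obtain ⟨r, hr, y, hy, rfl⟩ := mem_marked.1 hv
        exact .inr (.inr ⟨r, ⟨p, hp, hu, hr⟩, y, hy, rfl⟩)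

end HasSplittings

namespace PolClosure

theorem supClosed : SupClosed {L | PolClosure S L} := fun _ hK _ hL ↦ hK.union hL

theorem hasSplittings (hS : ∀ L ∈ S, HasSplittings S a L) (hL : PolClosure S L) :
    HasSplittings {L | PolClosure S L} a L := by
  induction hL with
  | @base L h =>
    obtain ⟨T, hfin, hT, hL⟩ := hS L h
    exact ⟨T, hfin, hT.trans (Set.prod_mono (fun _ ↦ .base) (fun _ ↦ .base)), hL⟩
  | union _ _ ih₁ ih₂ => exact ih₁.union ih₂
  | marked b hK hL ih₁ ih₂ => exact ih₁.marked (fun _ hK _ hL ↦ .marked b hK hL) hK hL ih₂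

theorem marked_inf (hbot : ⊥ ∈ S) {K₁ K₂ : Language A}
    (h₁ : ∀ M ∈ P, PolClosure S (K₁ ⊓ M)) (h₂ : ∀ M ∈ P, PolClosure S (K₂ ⊓ M))
    (hL : HasSplittings P a L) : PolClosure S (K₁ * {[a]} * K₂ ⊓ L) := by
  obtain ⟨T, hfin, hT, hL⟩ := hL
  have hsup : K₁ * {[a]} * K₂ ⊓ L = ⨆ p ∈ T, (K₁ ⊓ p.1) * {[a]} * (K₂ ⊓ p.2) := by
    ext w
    simp only [Language.mem_iSup, mem_marked, exists_prop]
    constructor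
    · rintro ⟨hw, hwL⟩
      obtain ⟨u, hu, v, hv, rfl⟩ := mem_marked.1 hw
      obtain ⟨p, hp, hpu, hpv⟩ := (hL u v).1 hwL
      exact ⟨p, hp, u, ⟨hu, hpu⟩, v, ⟨hv, hpv⟩, rfl⟩
    · rintro ⟨p, hp, u, ⟨hu, hpu⟩, v, ⟨hv, hpv⟩, rfl⟩
      exact ⟨mem_marked.2 ⟨u, hu, v, hv, rfl⟩, (hL u v).2 ⟨p, hp, hpu, hpv⟩⟩
  rw [hsup]
  exact supClosed.biSup_mem hfin (.base hbot) fun p hp ↦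
    .marked a (h₁ _ (hT hp).1) (h₂ _ (hT hp).2)

/-- Arfi's closure theorem in abstract form. -/
theorem inf (hbot : ⊥ ∈ S) (hinf : InfClosed S) (hS : ∀ L ∈ S, ∀ a, HasSplittings S a L)
    (hK : PolClosure S K) (hL : PolClosure S L) : PolClosure S (K ⊓ L) := by
  induction hK generalizing L with
  | @base K hK =>
    induction hL generalizing K with
    | base hL => exact .base (hinf hK hL)
    | union _ _ ih₁ ih₂ => exact inf_sup_left K _ _ ▸ (ih₁ hK).union (ih₂ hK)
    | marked a _ _ ih₁ ih₂ =>
      rw [inf_comm]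
      exact marked_inf hbot (fun M hM ↦ inf_comm M _ ▸ ih₁ hM)
        (fun M hM ↦ inf_comm M _ ▸ ih₂ hM) (hS K hK a)
  | union _ _ ih₁ ih₂ => exact inf_sup_right _ _ L ▸ (ih₁ hL).union (ih₂ hL)
  | marked a _ _ ih₁ ih₂ =>
    exact marked_inf hbot (fun M hM ↦ ih₁ hM) (fun M hM ↦ ih₂ hM)
      (hL.hasSplittings fun L hL ↦ hS L hL a)

end PolClosure

end Splittings

/-! ### Separation by level `3/2` -/

section Separation

variable {A : Type}

/-- The language `B*` of the words over a sub-alphabet `B`. -/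
def wordsOver (B : Set A) : Language A := {w | ∀ a ∈ w, a ∈ B}

/-- The class of the languages `∅` and `B*`, where `B` is a sub-alphabet; on a finite alphabet its
polynomial closure is level `3/2` of the Straubing-Thérien hierarchy. -/
def alphabetLanguages (A : Type) : Set (Language A) := insert ⊥ (Set.range wordsOver)

theorem top_mem_alphabetLanguages : ⊤ ∈ alphabetLanguages A :=
  .inr ⟨Set.univ, Set.eq_univ_of_forall fun _ _ _ ↦ Set.mem_univ _⟩

theorem infClosed_alphabetLanguages : InfClosed (alphabetLanguages A) := by
  rintro _ (rfl | ⟨B, rfl⟩) _ (rfl | ⟨C, rfl⟩)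
  · exact .inl (inf_bot_eq _)
  · exact .inl (bot_inf_eq _)
  · exact .inl (inf_bot_eq _)
  · exact .inr ⟨B ∩ C, Set.ext fun w ↦ forall₂_and⟩

theorem append_cons_mem_wordsOver {B : Set A} {u v : List A} {a : A} :
    u ++ a :: v ∈ wordsOver B ↔ a ∈ B ∧ u ∈ wordsOver B ∧ v ∈ wordsOver B := by
  change (∀ x ∈ u ++ a :: v, x ∈ B) ↔ a ∈ B ∧ (∀ x ∈ u, x ∈ B) ∧ ∀ x ∈ v, x ∈ B
  rw [List.forall_mem_append, List.forall_mem_cons]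
  tauto

theorem hasSplittings_alphabetLanguages {L : Language A} (hL : L ∈ alphabetLanguages A) (a : A) :
    HasSplittings (alphabetLanguages A) a L := by
  rcases hL with rfl | ⟨B, rfl⟩
  · exact ⟨∅, Set.finite_empty, Set.empty_subset _, fun u v ↦
      iff_of_false (Set.notMem_empty _) (by simp)⟩
  · refine ⟨{p | a ∈ B ∧ p = (wordsOver B, wordsOver B)}, (Set.finite_singleton _).subset
      fun p hp ↦ hp.2, ?_, fun u v ↦ ?_⟩
    · rintro _ ⟨-, rfl⟩
      exact ⟨.inr ⟨B, rfl⟩, .inr ⟨B, rfl⟩⟩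
    · rw [append_cons_mem_wordsOver]
      constructor
      · rintro ⟨ha, huv⟩
        exact ⟨_, ⟨ha, rfl⟩, huv⟩
      · rintro ⟨_, ⟨ha, rfl⟩, huv⟩
        exact ⟨ha, huv⟩

theorem infClosed_polClosure_alphabetLanguages :
    InfClosed {L : Language A | PolClosure (alphabetLanguages A) L} :=
  fun _ hK _ hL ↦ PolClosure.inf (.inl rfl) infClosed_alphabetLanguages
    (fun _ hL a ↦ hasSplittings_alphabetLanguages hL a) hK hL

theorem mem_biInf {ι : Type*} {I : Set ι} {f : ι → Language A} {w : List A} :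
    w ∈ ⨅ i ∈ I, f i ↔ ∀ i ∈ I, w ∈ f i :=
  Set.mem_iInter₂

theorem boolClosure_wordsOver [Finite A] (B : Set A) :
    BoolClosure {L | PolClosure {⊥, ⊤} L} (wordsOver B) := by
  have hB : wordsOver B = ⨅ b ∈ Bᶜ, ((⊤ : Language A) * {[b]} * ⊤)ᶜ := by
    ext w
    rw [mem_biInf]
    refine ⟨fun hw b hb hbw ↦ ?_, fun hw b hbw ↦ ?_⟩
    · obtain ⟨u, -, v, -, rfl⟩ := mem_marked.1 hbw
      exact hb (append_cons_mem_wordsOver.1 hw).1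
    · by_contra hb
      obtain ⟨u, v, rfl⟩ := List.append_of_mem hbw
      exact hw b hb (mem_marked.2 ⟨u, Set.mem_univ u, v, Set.mem_univ v, rfl⟩)
  have htop : PolClosure {⊥, ⊤} (⊤ : Language A) := .base (.inr rfl)
  have hinf : InfClosed {L : Language A | BoolClosure {L | PolClosure {⊥, ⊤} L} L} :=
    fun _ hK _ hL ↦ hK.inter hL
  rw [hB]
  exact hinf.biInf_mem (Set.toFinite _) (.base htop) fun b _ ↦
    .compl (.base (.marked b htop htop))

theorem PolClosure.mono {S T : Set (Language A)} (hST : S ⊆ T) {L : Language A}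
    (hL : PolClosure S L) : PolClosure T L := by
  induction hL with
  | base h => exact .base (hST h)
  | union _ _ ih₁ ih₂ => exact ih₁.union ih₂
  | marked a _ _ ih₁ ih₂ => exact .marked a ih₁ ih₂

theorem alphabetLanguages_subset_boolClosure [Finite A] :
    alphabetLanguages A ⊆ {L | BoolClosure {L | PolClosure {⊥, ⊤} L} L} := by
  rintro _ (rfl | ⟨B, rfl⟩)
  · exact .base (.base (.inl rfl))
  · exact boolClosure_wordsOver B

/-- The words above `u` for `PolLE m`. -/
def upset (m : ℕ) (u : List A) : Language A := {v | PolLE m u v}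

/-- The marked products that define `upset (m + 1) u`, one for each letter of `u`. -/
def splitTriples (m : ℕ) (u : List A) : Set (Language A × A × Language A) :=
  {T | ∃ u₁ a u₂, u = u₁ ++ a :: u₂ ∧ T = (upset m u₁, a, upset m u₂)}

theorem splitTriples_subset (m : ℕ) (u : List A) :
    splitTriples m u ⊆ Set.range (upset m) ×ˢ Set.univ ×ˢ Set.range (upset m) := by
  rintro _ ⟨u₁, a, u₂, -, rfl⟩
  exact ⟨⟨u₁, rfl⟩, Set.mem_univ a, ⟨u₂, rfl⟩⟩

theorem upset_succ (m : ℕ) (u : List A) :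
    upset (m + 1) u =
      wordsOver {a | a ∈ u} ⊓ ⨅ T ∈ splitTriples m u, T.1 * {[T.2.1]} * T.2.2 := by
  ext v
  refine and_congr_right fun _ ↦ Iff.trans ?_ mem_biInf.symm
  constructor
  · rintro h _ ⟨u₁, a, u₂, hu, rfl⟩
    obtain ⟨v₁, v₂, hv, h₁, h₂⟩ := h u₁ a u₂ hu
    exact mem_marked.2 ⟨v₁, h₁, v₂, h₂, hv⟩
  · intro h u₁ a u₂ hu
    obtain ⟨v₁, h₁, v₂, h₂, hv⟩ := mem_marked.1 (h _ ⟨u₁, a, u₂, hu, rfl⟩)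
    exact ⟨v₁, v₂, hv, h₁, h₂⟩

theorem finite_range_upset [Finite A] (m : ℕ) : (Set.range (upset (A := A) m)).Finite := by
  induction m with
  | zero =>
    exact Set.Finite.subset (Set.finite_range (wordsOver (A := A)))
      (Set.range_subset_iff.2 fun u ↦ ⟨{a | a ∈ u}, rfl⟩)
  | succ m ih =>
    have hfin := (Set.finite_univ (α := Set A)).prod
      (ih.prod ((Set.finite_univ (α := A)).prod ih)).powerset
    refine (hfin.image fun p ↦
      wordsOver p.1 ⊓ ⨅ T ∈ p.2, T.1 * {[T.2.1]} * T.2.2).subset ?_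
    rintro _ ⟨u, rfl⟩
    exact ⟨({a | a ∈ u}, splitTriples m u), ⟨Set.mem_univ _, splitTriples_subset m u⟩,
      (upset_succ m u).symm⟩

theorem polClosure_upset [Finite A] (m : ℕ) (u : List A) :
    PolClosure (alphabetLanguages A) (upset m u) := by
  induction m generalizing u with
  | zero => exact .base (.inr ⟨{a | a ∈ u}, rfl⟩)
  | succ m ih =>
    rw [upset_succ]
    refine infClosed_polClosure_alphabetLanguages (.base (.inr ⟨_, rfl⟩))
      (infClosed_polClosure_alphabetLanguages.biInf_mem ?_ (.base top_mem_alphabetLanguages) ?_)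
    · exact ((finite_range_upset m).prod
        (Set.finite_univ.prod (finite_range_upset m))).subset (splitTriples_subset m u)
    · rintro _ ⟨u₁, a, u₂, -, rfl⟩
      exact .marked a (ih u₁) (ih u₂)

theorem separable_hlevel_STbasis_three_iff [Finite A] {L L' : Language A} :
    Separable (hlevel STbasis 3 A) L L' ↔ ∃ m, ∀ u ∈ L, ∀ v ∈ L', ¬ PolLE m u v := by
  rw [hlevel_STbasis_three]
  constructor
  · rintro ⟨K, hK, hLK, hdisj⟩
    obtain ⟨m, hm⟩ := exists_polLE_mem_of_polClosure hK
    exact ⟨m, fun u hu v hv huv ↦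
      (hdisj.le (⟨hv, hm u v huv (hLK hu)⟩ : v ∈ L' ⊓ K) : v ∈ (⊥ : Language A))⟩
  · rintro ⟨m, hm⟩
    refine ⟨⨆ K ∈ upset m '' {u | u ∈ L}, K, ?_, fun u hu ↦ ?_, ?_⟩
    · refine PolClosure.supClosed.biSup_mem ((finite_range_upset m).subset
        (Set.image_subset_range _ _)) (.base (.base (.base (.inl rfl)))) ?_
      rintro _ ⟨u, -, rfl⟩
      exact (polClosure_upset m u).mono alphabetLanguages_subset_boolClosure
    · exact Language.mem_iSup.2 ⟨upset m u, Language.mem_iSup.2 ⟨⟨u, hu, rfl⟩, PolLE.refl m u⟩⟩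
    · refine eq_bot_iff.2 ?_
      rintro v ⟨hv, hvK⟩
      obtain ⟨_, hvK⟩ := Language.mem_iSup.1 hvK
      obtain ⟨⟨u, hu, rfl⟩, huv⟩ := Language.mem_iSup.1 hvK
      exact hm u hu v hv huv

end Separation

/-! ### Chains of blocks -/

section Chain

variable {A : Type*} {H D q : A} {M M' N : Language A} {R : List A → Prop} {m : ℕ}
  {e u v w x s t ρ : List A}

/-- The words `H m₁ H m₂ ⋯ m_k H` of the language `(HM)*H`, whose blocks `m₁, …, m_k` are in `M`. -/
inductive Chain (H : A) (M : Language A) : List A → Prop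
  | base : Chain H M [H]
  | step {m w : List A} : m ∈ M → Chain H M w → Chain H M (H :: (m ++ w))

/-- The language `(HM)*H`. -/
def chainLang (H : A) (M : Language A) : Language A := ({[H]} * M)∗ * {[H]}

theorem mem_chainLang : w ∈ chainLang H M ↔ Chain H M w := by
  constructor
  · rintro ⟨_, hs, _, rfl, rfl⟩
    obtain ⟨l, rfl, hl⟩ := Language.mem_kstar.1 hs
    clear hs
    induction l with
    | nil => exact .base
    | cons y l ih =>
      obtain ⟨⟨_, rfl, m, hm, rfl⟩, hl'⟩ := List.forall_mem_cons.1 hl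
      simpa using Chain.step hm (ih hl')
  · intro hw
    induction hw with
    | base => exact ⟨[], Language.nil_mem_kstar _, [H], rfl, rfl⟩
    | @step m w hm _ ih =>
      obtain ⟨_, hs, _, rfl, rfl⟩ := ih
      obtain ⟨l, rfl, hl⟩ := Language.mem_kstar.1 hs
      refine ⟨((H :: m) :: l).flatten, Language.join_mem_kstar (List.forall_mem_cons.2
        ⟨⟨[H], rfl, m, hm, rfl⟩, hl⟩), [H], rfl, by simp⟩

theorem append_cons_inj_of_notMem {z z' r r' : List A} (hz : H ∉ z) (hz' : H ∉ z')
    (h : z ++ H :: r = z' ++ H :: r') : z = z' ∧ r = r' := by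
  rcases append_eq_append_cons_iff.1 h with ⟨s, rfl, -⟩ | ⟨s, rfl, hs⟩
  · simp at hz
  · rcases List.cons_eq_append_iff.1 hs with ⟨rfl, hr⟩ | ⟨s, rfl, -⟩
    · exact ⟨by simp, (List.cons.inj hr).2.symm⟩
    · simp at hz'

namespace Chain

theorem exists_eq_cons (hw : Chain H M w) : ∃ w', w = H :: w' := by
  cases hw <;> exact ⟨_, rfl⟩

theorem wordPow_append (hw : Chain H M w) (he : e ∈ M) (q : ℕ) :
    Chain H M (wordPow (H :: e) q ++ w) := by
  induction q with
  | zero => exact hw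
  | succ q ih => simpa [wordPow_succ] using ih.step he

theorem append_concat (hw : Chain H M w) (he : e ∈ M) : Chain H M (w ++ e ++ [H]) := by
  induction hw with
  | base => exact .step he .base
  | step hm _ ih => simpa using ih.step hm

theorem reverse (hw : Chain H M w) : Chain H M.reverse w.reverse := by
  induction hw with
  | base => exact .base
  | step hm _ ih => simpa using ih.append_concat (Language.reverse_mem_reverse.2 hm)

theorem exists_last_cut (hu : Chain H M u) (hM : ∀ e ∈ M, H ∉ e) (hHq : H ≠ q) :
    ∃ y z r, q :: u = y ++ q :: (z ++ H :: r) ∧ H ∉ z ∧ q ∉ r ∧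
      (r = [] ∨ ∃ e ∈ M, ∃ r', r = e ++ H :: r') := by
  induction hu with
  | base => exact ⟨[], [], [], rfl, by simp, by simp, .inl rfl⟩
  | @step m w hm hw ih =>
    obtain ⟨y, z, r, hyz, hz, hq, hr⟩ := ih
    rcases List.cons_eq_append_iff.1 hyz with ⟨rfl, h⟩ | ⟨y, rfl, rfl⟩
    · obtain ⟨w, rfl⟩ := hw.exists_eq_cons
      obtain ⟨rfl, rfl⟩ := append_cons_inj_of_notMem hz (List.not_mem_nil (a := H))
        (List.cons.inj h).2
      by_cases hqm : q ∈ m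
      · obtain ⟨m₂, m₁, rfl⟩ : ∃ m₂ m₁, m = m₂ ++ q :: m₁ := List.append_of_mem hqm
        exact ⟨q :: H :: m₂, m₁, r, by simp, fun h ↦ hM _ hm (by simp [h]), hq, hr⟩
      · exact ⟨[], [], m ++ H :: r, rfl, by simp, by simp [hqm, hHq.symm, hq],
          .inr ⟨m, hm, r, rfl⟩⟩
    · exact ⟨q :: H :: (m ++ y), z, r, by simp, hz, hq, hr⟩

end Chain

/-- Whenever an occurrence of `q` is followed by a word `z H r` where `H` is not in `z` and `q` is
not in `r`, the word `r` has the property `R`. It is applied to words `q w`, so that an occurrence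
of `q` always exists. -/
def AfterLast (q H : A) (R : List A → Prop) (w : List A) : Prop :=
  ∀ y z r, w = y ++ q :: (z ++ H :: r) → H ∉ z → q ∉ r → R r

namespace AfterLast

theorem of_notMem (hq : q ∉ w) : AfterLast q H R w := by
  rintro y z r rfl
  simp at hq

theorem cons_of_cons (hDq : D ≠ q) (hw : AfterLast q H R (q :: w)) : AfterLast q H R (D :: w) := by
  intro y z r hyz
  rcases List.cons_eq_append_iff.1 hyz with ⟨rfl, h⟩ | ⟨y, rfl, rfl⟩
  · exact absurd (List.cons.inj h).1.symm hDq
  · exact hw (q :: y) z r rfl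

theorem cons_cons (hHq : H ≠ q) (hw : AfterLast q H R w) (hR : q ∉ w → R w) :
    AfterLast q H R (q :: H :: w) := by
  intro y z r hyz hz hq
  rcases List.cons_eq_append_iff.1 hyz with ⟨rfl, h⟩ | ⟨y, rfl, h⟩
  · obtain ⟨rfl, rfl⟩ := append_cons_inj_of_notMem hz (List.not_mem_nil (a := H))
      (List.cons.inj h).2
    exact hR hq
  · rcases List.cons_eq_append_iff.1 h with h | ⟨y, rfl, rfl⟩
    · exact absurd (List.cons.inj h.2).1.symm hHq
    · exact hw y z r rfl hz hq

theorem append_cons (hH : H ∉ x) (hw : AfterLast q H R (q :: H :: w)) :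
    AfterLast q H R (x ++ H :: w) := by
  intro y z r hyz hz hq
  rcases append_eq_append_cons_iff.1 hyz with ⟨x₂, rfl, h⟩ | ⟨y, rfl, h⟩
  · obtain ⟨rfl, rfl⟩ := append_cons_inj_of_notMem hz (fun h ↦ hH (by simp [h])) h
    exact hw [] [] r rfl List.not_mem_nil hq
  · exact hw (q :: y) z r (congrArg (q :: ·) h) hz hq

end AfterLast

theorem Chain.afterLast_append (hs : Chain H N s) (hHq : H ≠ q) (hN : ∀ e ∈ N, H ∉ e)
    (hNR : ∀ e ∈ N, q ∉ e → ∀ r, R (e ++ H :: r)) (hρ : AfterLast q H R ρ) (hR : R ρ) :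
    AfterLast q H R (q :: (s ++ ρ)) := by
  induction hs with
  | base => exact hρ.cons_cons hHq fun _ ↦ hR
  | @step e w he hw ih =>
    obtain ⟨w, rfl⟩ := hw.exists_eq_cons
    rw [List.cons_append, List.append_assoc]
    refine (ih.append_cons (hN e he)).cons_cons hHq fun hq ↦ hNR e he ?_ _
    exact fun hqe ↦ hq (List.mem_append_left _ hqe)

theorem Chain.exists_polLE_block_of_afterLast (hu : Chain H M u) (hM : ∀ e ∈ M, H ∉ e)
    (hM' : ∀ e ∈ M', H ∉ e) (hMD : ∀ e, D :: e ∉ M) (hHD : H ≠ D) (hHq : H ≠ q)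
    (hv : AfterLast q H (fun r ↦ (∃ t, r = D :: t) ∨ ∃ e ∈ M', ∃ r', r = e ++ H :: r') (q :: v))
    (huv : PolLE (m + 4) u v) :
    ∃ e ∈ M, ∃ e' ∈ M', q ∉ e ∧ e ⊆ u ∧ PolLE (m + 1) e e' := by
  obtain ⟨y, z, r, hyz, hHz, hqr, hr⟩ := hu.exists_last_cut hM hHq
  have hquv : PolLE (m + 4) (q :: u) (q :: v) := (PolLE.refl _ [q]).append huv
  rw [hyz] at hquv
  obtain ⟨y', x', hyx', -, hzx'⟩ := hquv.split
  obtain ⟨z', r', rfl, hzz', hrr'⟩ := hzx'.split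
  rcases hr with rfl | ⟨e, he, r, rfl⟩
  · obtain rfl : r' = [] := List.subset_nil.1 hrr'.subset
    simpa using hv y' z' [] hyx' (fun h ↦ hHz (hzz'.subset h)) List.not_mem_nil
  · have hqe : q ∉ e := fun h ↦ hqr (List.mem_append_left _ h)
    have heu : e ⊆ u := fun a ha ↦ by
      have hau : a ∈ q :: u := by simp [hyz, ha]
      exact (List.mem_cons.1 hau).resolve_left fun haq ↦ hqe (haq ▸ ha)
    have hr' := hv y' z' r' hyx' (fun h ↦ hHz (hzz'.subset h)) (fun h ↦ hqr (hrr'.subset h))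
    obtain ⟨e', r', rfl, hee', -⟩ := hrr'.split
    have hHe' : H ∉ e' := fun h ↦ hM e he (hee'.subset h)
    rcases hr' with ⟨t, ht⟩ | ⟨f, hf, r'', hr''⟩
    · rcases List.append_eq_cons_iff.1 ht with ⟨-, h⟩ | ⟨e'', rfl, -⟩
      · exact absurd (List.cons.inj h).1 hHD
      · rcases e with _ | ⟨c, e⟩
        · exact absurd hee'.subset (by simp)
        · obtain ⟨_, h, -⟩ := hee'.of_cons
          exact absurd ((List.cons.inj h).1 ▸ he) (hMD e)
    · obtain ⟨rfl, -⟩ := append_cons_inj_of_notMem hHe' (hM' f hf) hr''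
      exact ⟨e, he, e', hf, hqe, heu, hee'⟩

theorem Chain.exists_polLE_block (hu : Chain H M u) (hM : ∀ e ∈ M, H ∉ e)
    (hM' : ∀ e ∈ M', H ∉ e) (hMD : ∀ e, D :: e ∉ M) (hHD : H ≠ D) (hHq : H ≠ q)
    (hs : Chain H M' s) (hq : q ∉ D :: t) (hus : PolLE (m + 4) u (s ++ D :: t)) :
    ∃ e ∈ M, ∃ e' ∈ M', q ∉ e ∧ e ⊆ u ∧ PolLE (m + 1) e e' :=
  hu.exists_polLE_block_of_afterLast hM hM' hMD hHD hHq
    (hs.afterLast_append hHq hM' (fun e he _ r ↦ .inr ⟨e, he, r, rfl⟩) (.of_notMem hq)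
      (.inl ⟨t, rfl⟩)) hus

theorem Chain.exists_polLE_block_right (hu : Chain H M u) (hM : ∀ e ∈ M, H ∉ e)
    (hM' : ∀ e ∈ M', H ∉ e) (hMD : ∀ e, D :: e ∉ M) (hHD : H ≠ D) (hHq : H ≠ q)
    (hx : Chain H N x) (hN : ∀ e ∈ N, H ∉ e ∧ q ∈ e) (hs : Chain H M' s) (hq : q ∉ D :: t)
    (hus : PolLE (m + 4) u (x ++ D :: (s ++ D :: t))) :
    ∃ e ∈ M, ∃ e' ∈ M', q ∉ e ∧ e ⊆ u ∧ PolLE (m + 1) e e' := by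
  have hst := hs.afterLast_append
    (R := fun r ↦ (∃ t, r = D :: t) ∨ ∃ e ∈ M', ∃ r', r = e ++ H :: r') hHq hM'
    (fun e he _ r ↦ .inr ⟨e, he, r, rfl⟩) (.of_notMem hq) (.inl ⟨t, rfl⟩)
  refine hu.exists_polLE_block_of_afterLast hM hM' hMD hHD hHq
    (hx.afterLast_append hHq (fun e he ↦ (hN e he).1) (fun e he hqe ↦ absurd (hN e he).2 hqe)
      (hst.cons_of_cons ?_) (.inl ⟨_, rfl⟩)) hus
  rintro rfl
  exact hq List.mem_cons_self

theorem Chain.exists_polLE_block_left (hu : Chain H M u) (hM : ∀ e ∈ M, H ∉ e)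
    (hM' : ∀ e ∈ M', H ∉ e) (hMD : ∀ e, e ++ [D] ∉ M) (hHD : H ≠ D) (hHq : H ≠ q)
    (hx : Chain H N x) (hN : ∀ e ∈ N, H ∉ e ∧ q ∈ e) (hs : Chain H M' s) (hq : q ∉ D :: t)
    (hus : PolLE (m + 4) u (t ++ D :: (s ++ D :: x))) :
    ∃ e ∈ M, ∃ e' ∈ M', q ∉ e ∧ e ⊆ u ∧ PolLE (m + 1) e e' := by
  obtain ⟨e, he, e', he', hqe, heu, hee'⟩ := hu.reverse.exists_polLE_block_right (M' := M'.reverse)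
    (N := N.reverse) (D := D) (q := q) (m := m) (s := s.reverse) (t := t.reverse)
    (fun e he ↦ by simpa using hM _ he) (fun e he ↦ by simpa using hM' _ he)
    (fun e he ↦ hMD e.reverse (by simpa using he)) hHD hHq hx.reverse
    (fun e he ↦ by simpa using hN _ he) hs.reverse (by simpa using hq) (by simpa using hus.reverse)
  exact ⟨e.reverse, he, e'.reverse, he', by simpa using hqe, fun a ha ↦ by
    simpa using heu (List.mem_reverse.1 ha), hee'.reverse⟩

theorem wordPow_append_mem_chainLang {e : List A} (he : e ∈ M) (q : ℕ) :
    wordPow (H :: e) q ++ [H] ∈ chainLang H M :=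
  mem_chainLang.2 (Chain.base.wordPow_append he q)

end Chain

/-! ### The reduction -/

section WordsOver

variable {A : Type} {B C : Set A} {K L : Language A} {a : A}

theorem wordsOver_mono (hBC : B ⊆ C) : wordsOver B ≤ wordsOver C :=
  fun _ hw a ha ↦ hBC (hw a ha)

theorem singleton_le_wordsOver (ha : a ∈ B) : {[a]} ≤ wordsOver B := by
  rintro _ rfl
  exact List.forall_mem_singleton.2 ha

theorem mul_le_wordsOver (hK : K ≤ wordsOver B) (hL : L ≤ wordsOver B) : K * L ≤ wordsOver B := by
  rintro _ ⟨u, hu, v, hv, rfl⟩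
  exact List.forall_mem_append.2 ⟨hK hu, hL hv⟩

theorem kstar_le_wordsOver (hL : L ≤ wordsOver B) : L∗ ≤ wordsOver B := by
  intro w hw a ha
  obtain ⟨l, rfl, hl⟩ := Language.mem_kstar.1 hw
  obtain ⟨u, hu, hau⟩ := List.mem_flatten.1 ha
  exact hL (hl u hu) a hau

theorem chainLang_le_wordsOver (ha : a ∈ B) (hL : L ≤ wordsOver B) :
    chainLang a L ≤ wordsOver B :=
  mul_le_wordsOver (kstar_le_wordsOver (mul_le_wordsOver (singleton_le_wordsOver ha) hL))
    (singleton_le_wordsOver ha)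

end WordsOver

section Reduction

variable {n : ℕ} {Q : ℕ → Bool} {φ : List (List (Fin n × Bool))} {v : Fin n → Bool} {b : Bool}
  {j : Fin n} {L : Language (Letter n)} {e w : List (Letter n)} {a : Letter n}

/-- The letter of the literal `x_{j+1}` (for `b = true`) or `¬x_{j+1}` (for `b = false`). -/
def Letter.lit (j : Fin n) (b : Bool) : Letter n := if b then .pos j else .neg j

theorem lit_mem_Bsub (j : Fin n) (b : Bool) (i : ℕ) : .lit j b ∈ Bsub n i := by
  cases b <;> trivial

theorem mem_Val_update_iff :
    a ∈ Val n j (Function.update v j b) ↔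
      a ∈ Val n (j + 1) v ∧ a ∈ Bsub n j ∧ a ≠ .lit j (!b) := by
  rcases a with k | k | k | _
  · rcases eq_or_ne k j with rfl | hkj
    · cases b <;> simp [Val, Bsub, Letter.lit]
    · have := Fin.val_ne_of_ne hkj
      cases b <;> simp [Val, Bsub, Letter.lit, hkj] <;> lia
  · rcases eq_or_ne k j with rfl | hkj
    · cases b <;> simp [Val, Bsub, Letter.lit]
    · have := Fin.val_ne_of_ne hkj
      cases b <;> simp [Val, Bsub, Letter.lit, hkj] <;> lia
  · cases b <;> simp [Val, Bsub, Letter.lit] <;> lia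
  · cases b <;> simp [Val, Bsub, Letter.lit]

/-- The language `x + x̄`, where `x = x_{j+1}`. -/
def litLetters (j : Fin n) : Language (Letter n) := {w | w = [.pos j] ∨ w = [.neg j]}

/-- The blocks `(x + x̄) L $ (x + x̄)` of the reduction, where `x = x_{j+1}`. -/
def litBlocks (j : Fin n) (L : Language (Letter n)) : Language (Letter n) :=
  litLetters j * L * ltr .dollar * litLetters j

/-- The blocks `x (B_j ∖ {x̄})* $ x` (for `b = true`) or `x̄ (B_j ∖ {x})* $ x̄` (for `b = false`) of
the reduction, where `x = x_{j+1}`. -/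
def pureBlocks (j : Fin n) (b : Bool) : Language (Letter n) :=
  ltr (.lit j b) * alphStar {a | a ∈ Bsub n j ∧ a ≠ .lit j (!b)} * ltr .dollar * ltr (.lit j b)

theorem mem_litLetters : w ∈ litLetters j ↔ ∃ b, w = [.lit j b] := by
  rw [Bool.exists_bool]
  exact or_comm

theorem mem_litBlocks :
    w ∈ litBlocks j L ↔ ∃ b, ∃ l ∈ L, ∃ c, w = .lit j b :: (l ++ [.dollar, .lit j c]) := by
  constructor
  · rintro ⟨_, ⟨_, ⟨_, hx, l, hl, rfl⟩, _, rfl, rfl⟩, _, hy, rfl⟩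
    obtain ⟨b, rfl⟩ := mem_litLetters.1 hx
    obtain ⟨c, rfl⟩ := mem_litLetters.1 hy
    exact ⟨b, l, hl, c, by simp⟩
  · rintro ⟨b, l, hl, c, rfl⟩
    exact ⟨_, ⟨_, ⟨_, mem_litLetters.2 ⟨b, rfl⟩, l, hl, rfl⟩, _, rfl, rfl⟩, _,
      mem_litLetters.2 ⟨c, rfl⟩, by simp⟩

theorem mem_pureBlocks :
    w ∈ pureBlocks j b ↔ ∃ l, (∀ a ∈ l, a ∈ Bsub n j ∧ a ≠ .lit j (!b)) ∧
      w = .lit j b :: (l ++ [.dollar, .lit j b]) := by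
  constructor
  · rintro ⟨_, ⟨_, ⟨_, rfl, l, hl, rfl⟩, _, rfl, rfl⟩, _, rfl, rfl⟩
    exact ⟨l, hl, by simp⟩
  · rintro ⟨l, hl, rfl⟩
    exact ⟨_, ⟨_, ⟨_, rfl, l, hl, rfl⟩, _, rfl, rfl⟩, _, rfl, by simp⟩

theorem LL_succ_fst :
    (LL n Q φ (j + 1)).1 = chainLang (.hash j) (litBlocks j (LL n Q φ j).1) := by
  have h : (LL n Q φ (j + 1)).1 = (ltr (.hash j) * litLetters j * (LL n Q φ j).1 * ltr .dollar *
      litLetters j)∗ * ltr (.hash j) := by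
    rw [LL, dif_pos j.2]
    rfl
  simp only [h, chainLang, litBlocks, mul_assoc]
  rfl

theorem LL_succ_snd_of_exists (hQ : Q j = true) :
    (LL n Q φ (j + 1)).2 =
      chainLang (.hash j) (litBlocks j (LL n Q φ j).2) * {[.dollar]} *
        (chainLang (.hash j) (pureBlocks j true) + chainLang (.hash j) (pureBlocks j false)) := by
  have h : (LL n Q φ (j + 1)).2 = (ltr (.hash j) * litLetters j * (LL n Q φ j).2 * ltr .dollar *
      litLetters j)∗ * ltr (.hash j) * ltr .dollar *
        ((ltr (.hash j) * ltr (.lit j true) * alphStar {a | a ∈ Bsub n j ∧ a ≠ .lit j false} *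
          ltr .dollar * ltr (.lit j true))∗ * ltr (.hash j) +
        (ltr (.hash j) * ltr (.lit j false) * alphStar {a | a ∈ Bsub n j ∧ a ≠ .lit j true} *
          ltr .dollar * ltr (.lit j false))∗ * ltr (.hash j)) := by
    rw [LL, dif_pos j.2, hQ]
    rfl
  simp only [h, chainLang, litBlocks, pureBlocks, mul_assoc]
  rfl

theorem LL_succ_snd_of_forall (hQ : Q j = false) :
    (LL n Q φ (j + 1)).2 =
      chainLang (.hash j) (pureBlocks j false) * {[.dollar]} *
        (chainLang (.hash j) (litBlocks j (LL n Q φ j).2) * {[.dollar]} *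
          chainLang (.hash j) (pureBlocks j true)) := by
  have h : (LL n Q φ (j + 1)).2 =
      (ltr (.hash j) * ltr (.lit j false) * alphStar {a | a ∈ Bsub n j ∧ a ≠ .lit j true} *
        ltr .dollar * ltr (.lit j false))∗ * ltr (.hash j) * ltr .dollar *
      (ltr (.hash j) * litLetters j * (LL n Q φ j).2 * ltr .dollar *
        litLetters j)∗ * ltr (.hash j) * ltr .dollar *
      (ltr (.hash j) * ltr (.lit j true) * alphStar {a | a ∈ Bsub n j ∧ a ≠ .lit j false} *
        ltr .dollar * ltr (.lit j true))∗ * ltr (.hash j) := by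
    rw [LL, dif_pos j.2, hQ]
    rfl
  simp only [h, chainLang, litBlocks, pureBlocks, mul_assoc]
  rfl

/-- The alphabet of the blocks of `L_{j+1}` and `L'_{j+1}`. -/
def blockLetters (j : Fin n) : Set (Letter n) := {a | a ∈ Bsub n (j + 1) ∧ a ≠ .hash j}

theorem Bsub_subset_blockLetters : Bsub n j ⊆ blockLetters j := by
  rintro (k | k | k | _) h
  · exact ⟨trivial, by simp⟩
  · exact ⟨trivial, by simp⟩
  · refine ⟨Nat.lt_succ_of_lt h, fun hk ↦ ?_⟩
    exact absurd h (by simp [Letter.hash.inj hk, Bsub])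
  · exact ⟨Nat.succ_pos _, by simp⟩

theorem lit_mem_blockLetters : .lit j b ∈ blockLetters j :=
  Bsub_subset_blockLetters (lit_mem_Bsub j b j)

theorem dollar_mem_blockLetters : .dollar ∈ blockLetters j := ⟨Nat.succ_pos _, by simp⟩

theorem litBlocks_le_wordsOver (hL : L ≤ wordsOver (Bsub n j)) :
    litBlocks j L ≤ wordsOver (blockLetters j) := by
  have hlit : litLetters j ≤ wordsOver (blockLetters j) := by
    intro w hw
    obtain ⟨b, rfl⟩ := mem_litLetters.1 hw
    exact List.forall_mem_singleton.2 lit_mem_blockLetters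
  exact mul_le_wordsOver (mul_le_wordsOver (mul_le_wordsOver hlit
    (hL.trans (wordsOver_mono Bsub_subset_blockLetters)))
    (singleton_le_wordsOver dollar_mem_blockLetters)) hlit

theorem pureBlocks_le_wordsOver : pureBlocks j b ≤ wordsOver (blockLetters j) :=
  mul_le_wordsOver (mul_le_wordsOver (mul_le_wordsOver
    (singleton_le_wordsOver lit_mem_blockLetters)
    (fun _ hw a ha ↦ Bsub_subset_blockLetters (hw a ha).1))
    (singleton_le_wordsOver dollar_mem_blockLetters)) (singleton_le_wordsOver lit_mem_blockLetters)

theorem prod_clauseLang_le_wordsOver :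
    (φ.map (clauseLang n)).prod ≤ wordsOver (Bsub n 0) := by
  induction φ with
  | nil =>
    rintro _ rfl
    exact List.forall_mem_nil _
  | cons c φ ih =>
    rw [List.map_cons, List.prod_cons]
    refine mul_le_wordsOver ?_ ih
    rintro _ ⟨p, -, rfl⟩
    exact List.forall_mem_singleton.2 (lit_mem_Bsub p.1 p.2 0)

theorem chainLang_hash_le_wordsOver (hL : L ≤ wordsOver (blockLetters j)) :
    chainLang (.hash j) L ≤ wordsOver (Bsub n (j + 1)) :=
  chainLang_le_wordsOver (Nat.lt_succ_self _)
    (hL.trans (wordsOver_mono fun _ ha ↦ ha.1))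

theorem LL_le_wordsOver (i : ℕ) :
    (LL n Q φ i).1 ≤ wordsOver (Bsub n i) ∧ (LL n Q φ i).2 ≤ wordsOver (Bsub n i) := by
  induction i with
  | zero =>
    rw [LL]
    exact ⟨le_rfl, prod_clauseLang_le_wordsOver⟩
  | succ i ih =>
    by_cases h : i < n
    · lift i to Fin n using h
      have hlit := chainLang_hash_le_wordsOver (litBlocks_le_wordsOver ih.2)
      have hpure (b : Bool) :=
        chainLang_hash_le_wordsOver (pureBlocks_le_wordsOver (j := i) (b := b))
      have hdollar : {[.dollar]} ≤ wordsOver (Bsub n (i + 1)) :=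
        singleton_le_wordsOver (Nat.succ_pos _)
      refine ⟨LL_succ_fst.trans_le (chainLang_hash_le_wordsOver (litBlocks_le_wordsOver ih.1)), ?_⟩
      rcases hQ : Q i
      · rw [LL_succ_snd_of_forall hQ]
        exact mul_le_wordsOver (mul_le_wordsOver (hpure _) hdollar)
          (mul_le_wordsOver (mul_le_wordsOver hlit hdollar) (hpure _))
      · rw [LL_succ_snd_of_exists hQ]
        exact mul_le_wordsOver (mul_le_wordsOver hlit hdollar) (sup_le (hpure _) (hpure _))
    · rw [LL, dif_neg h]
      exact ⟨bot_le, bot_le⟩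

variable {m : ℕ} {e' : List (Letter n)}

/-- Some word of `L_i` over the sub-alphabet `V` of the valuation `v` lies below a word of `L'_i`
for the canonical preorder of rank `m`. -/
def Linked (Q : ℕ → Bool) (φ : List (List (Fin n × Bool))) (m i : ℕ) (v : Fin n → Bool) : Prop :=
  ∃ u ∈ (LL n Q φ i).1, ∃ u' ∈ (LL n Q φ i).2, (∀ a ∈ u, a ∈ Val n i v) ∧ PolLE m u u'

theorem Linked.of_le {k i : ℕ} (hk : k ≤ m) (h : Linked Q φ m i v) : Linked Q φ k i v := by
  obtain ⟨u, hu, u', hu', hv, huu'⟩ := h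
  exact ⟨u, hu, u', hu', hv, huu'.of_le hk⟩

theorem lit_mem_Val_zero_iff {p : Fin n × Bool} :
    (if p.2 then Letter.pos p.1 else .neg p.1) ∈ Val n 0 v ↔ v p.1 = p.2 := by
  rcases p with ⟨j, _ | _⟩ <;> simp [Val]

theorem exists_mem_prod_clauseLang_iff :
    (∃ w ∈ (φ.map (clauseLang n)).prod, ∀ a ∈ w, a ∈ Val n 0 v) ↔
      ∀ c ∈ φ, ∃ p ∈ c, v p.1 = p.2 := by
  induction φ with
  | nil => exact iff_of_true ⟨[], rfl, List.forall_mem_nil _⟩ (List.forall_mem_nil _)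
  | cons c φ ih =>
    rw [List.map_cons, List.prod_cons, List.forall_mem_cons, ← ih]
    constructor
    · rintro ⟨_, ⟨_, ⟨p, hp, rfl⟩, w, hw, rfl⟩, hv⟩
      obtain ⟨hpv, hwv⟩ := List.forall_mem_cons.1 hv
      exact ⟨⟨p, hp, lit_mem_Val_zero_iff.1 hpv⟩, w, hw, hwv⟩
    · rintro ⟨⟨p, hp, hpv⟩, w, hw, hwv⟩
      exact ⟨_, ⟨_, ⟨p, hp, rfl⟩, w, hw, rfl⟩,
        List.forall_mem_cons.2 ⟨lit_mem_Val_zero_iff.2 hpv, hwv⟩⟩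

theorem linked_zero_iff : Linked Q φ m 0 v ↔ QTruth n Q φ 0 v := by
  rw [QTruth, ← exists_mem_prod_clauseLang_iff]
  constructor
  · rintro ⟨u, -, w, hw, hv, huw⟩
    rw [LL] at hw
    exact ⟨w, hw, fun a ha ↦ hv a (huw.subset ha)⟩
  · rintro ⟨w, hw, hv⟩
    have hw₀ : w ∈ alphStar (Bsub n 0) := prod_clauseLang_le_wordsOver hw
    refine ⟨w, ?_, w, ?_, hv, .refl m w⟩ <;> rwa [LL]

theorem Linked.exists_blocks (h : Linked Q φ m j (Function.update v j b)) :
    ∃ e ∈ litBlocks j (LL n Q φ j).1, e ∈ pureBlocks j b ∧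
      ∃ e' ∈ litBlocks j (LL n Q φ j).2, (∀ a ∈ .hash j :: e, a ∈ Val n (j + 1) v) ∧
        .dollar ∈ e ∧ PolLE m e e' := by
  obtain ⟨l, hl, l', hl', hv, hll'⟩ := h
  refine ⟨_, mem_litBlocks.2 ⟨b, l, hl, b, rfl⟩,
    mem_pureBlocks.2 ⟨l, fun a ha ↦ (mem_Val_update_iff.1 (hv a ha)).2, rfl⟩,
    _, mem_litBlocks.2 ⟨b, l', hl', b, rfl⟩, fun a ha ↦ ?_, by simp,
    (PolLE.refl m [_]).append (hll'.append (.refl m _))⟩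
  have hlit : .lit j b ∈ Val n (j + 1) v := by cases b <;> exact .inl (Nat.lt_succ_self _)
  have hhash : .hash j ∈ Val n (j + 1) v := Nat.lt_succ_self _
  have hdollar : .dollar ∈ Val n (j + 1) v := Nat.succ_pos _
  simp only [List.mem_cons, List.mem_append, List.not_mem_nil, or_false] at ha
  rcases ha with rfl | rfl | ha | rfl | rfl
  exacts [hhash, hlit, (mem_Val_update_iff.1 (hv a ha)).1, hdollar, hlit]

theorem linked_succ_of_exists (hQ : Q j = true)
    (h : Linked Q φ m j (Function.update v j b)) : Linked Q φ m (j + 1) v := by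
  obtain ⟨p, hp⟩ := exists_pumpsAt (Letter n) m
  obtain ⟨e, he, heb, e', he', hv, hdollar, hee'⟩ := h.exists_blocks
  have hpure : chainLang (.hash j) (pureBlocks j b) ≤
      chainLang (.hash j) (pureBlocks j true) + chainLang (.hash j) (pureBlocks j false) := by
    cases b
    exacts [le_sup_right, le_sup_left]
  have hu : PolLE m (wordPow (.hash j :: e) (p + p))
      (wordPow (.hash j :: e') p ++ [.hash j, .dollar] ++ wordPow (.hash j :: e) p) :=
    hp.polLE_insert ((PolLE.refl m [_]).append hee') (.refl m _) (by simp [hdollar])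
  refine ⟨wordPow (.hash j :: e) (p + p) ++ [.hash j], ?_,
    (wordPow (.hash j :: e') p ++ [.hash j]) ++ .dollar :: (wordPow (.hash j :: e) p ++ [.hash j]),
    ?_, ?_, ?_⟩
  · rw [LL_succ_fst]
    exact wordPow_append_mem_chainLang he _
  · rw [LL_succ_snd_of_exists hQ]
    exact mem_marked.2 ⟨_, wordPow_append_mem_chainLang he' p, _,
      hpure (wordPow_append_mem_chainLang heb p), rfl⟩
  · exact List.forall_mem_append.2 ⟨fun a ha ↦ hv a (wordPow_subset _ _ ha),
      List.forall_mem_singleton.2 (hv _ List.mem_cons_self)⟩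
  · simpa using hu.append (.refl m [.hash j])

theorem linked_succ_of_forall (hQ : Q j = false)
    (h : ∀ b, Linked Q φ m j (Function.update v j b)) : Linked Q φ m (j + 1) v := by
  obtain ⟨p, hp⟩ := exists_pumpsAt (Letter n) m
  obtain ⟨e, he, he₁, e', he', hv, hdollar, hee'⟩ := (h true).exists_blocks
  obtain ⟨f, hf, hf₀, f', hf', hv', hdollar', hff'⟩ := (h false).exists_blocks
  have hu₀ : PolLE m (wordPow (.hash j :: f) (p + p))
      (wordPow (.hash j :: f) p ++ [.hash j, .dollar] ++ wordPow (.hash j :: f') p) :=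
    hp.polLE_insert (.refl m _) ((PolLE.refl m [_]).append hff') (by simp [hdollar'])
  have hu₁ : PolLE m (wordPow (.hash j :: e) (p + p))
      (wordPow (.hash j :: e') p ++ [.hash j, .dollar] ++ wordPow (.hash j :: e) p) :=
    hp.polLE_insert ((PolLE.refl m [_]).append hee') (.refl m _) (by simp [hdollar])
  refine ⟨wordPow (.hash j :: f) (p + p) ++ (wordPow (.hash j :: e) (p + p) ++ [.hash j]), ?_,
    (wordPow (.hash j :: f) p ++ [.hash j]) ++ .dollar ::
      ((wordPow (.hash j :: f') p ++ (wordPow (.hash j :: e') p ++ [.hash j])) ++ .dollar ::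
        (wordPow (.hash j :: e) p ++ [.hash j])), ?_, ?_, ?_⟩
  · rw [LL_succ_fst]
    exact mem_chainLang.2 ((Chain.base.wordPow_append he _).wordPow_append hf _)
  · rw [LL_succ_snd_of_forall hQ]
    have hmid : wordPow (.hash j :: f') p ++ (wordPow (.hash j :: e') p ++ [.hash j]) ∈
        chainLang (.hash j) (litBlocks j (LL n Q φ j).2) :=
      mem_chainLang.2 ((Chain.base.wordPow_append he' _).wordPow_append hf' _)
    exact mem_marked.2 ⟨_, wordPow_append_mem_chainLang hf₀ p, _,
      mem_marked.2 ⟨_, hmid, _, wordPow_append_mem_chainLang he₁ p, rfl⟩, rfl⟩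
  · exact List.forall_mem_append.2 ⟨fun a ha ↦ hv' a (wordPow_subset _ _ ha),
      List.forall_mem_append.2 ⟨fun a ha ↦ hv a (wordPow_subset _ _ ha),
        List.forall_mem_singleton.2 (hv _ List.mem_cons_self)⟩⟩
  · simpa using hu₀.append (hu₁.append (.refl m [.hash j]))

theorem hash_notMem_of_le (hL : L ≤ wordsOver (blockLetters j)) (he : e ∈ L) : .hash j ∉ e :=
  fun h ↦ (hL he _ h).2 rfl

theorem hash_ne_lit (j : Fin n) (b : Bool) : .hash j ≠ Letter.lit j b := by
  cases b <;> simp [Letter.lit]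

theorem dollar_ne_lit (j : Fin n) (b : Bool) : .dollar ≠ Letter.lit j b := by
  cases b <;> simp [Letter.lit]

theorem lit_ne_lit_not (j : Fin n) (b : Bool) : Letter.lit j b ≠ .lit j !b := by
  cases b <;> simp [Letter.lit]

theorem dollar_cons_notMem_litBlocks (e : List (Letter n)) : .dollar :: e ∉ litBlocks j L := by
  intro h
  obtain ⟨b, l, -, c, h⟩ := mem_litBlocks.1 h
  exact dollar_ne_lit j b (List.cons.inj h).1

theorem append_dollar_notMem_litBlocks (e : List (Letter n)) : e ++ [.dollar] ∉ litBlocks j L := by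
  intro h
  obtain ⟨b, l, -, c, h⟩ := mem_litBlocks.1 h
  refine dollar_ne_lit j c ?_
  rw [List.append_cons l, ← List.cons_append] at h
  exact List.singleton_injective (List.append_inj' h rfl).2

theorem lit_mem_of_mem_pureBlocks (he : e ∈ pureBlocks j b) : .lit j b ∈ e := by
  obtain ⟨l, -, rfl⟩ := mem_pureBlocks.1 he
  exact List.mem_cons_self

theorem lit_not_notMem_dollar_cons (hw : w ∈ chainLang (.hash j) (pureBlocks j b)) :
    .lit j (!b) ∉ .dollar :: w := by
  have hlit := singleton_le_wordsOver (B := {Letter.lit j !b}ᶜ) (lit_ne_lit_not j b)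
  have hpure : pureBlocks j b ≤ wordsOver {.lit j !b}ᶜ :=
    mul_le_wordsOver (mul_le_wordsOver (mul_le_wordsOver hlit fun _ hl a ha ↦ (hl a ha).2)
      (singleton_le_wordsOver (dollar_ne_lit j _))) hlit
  exact List.not_mem_cons_of_ne_of_not_mem (dollar_ne_lit j _).symm
    fun h ↦ chainLang_le_wordsOver (hash_ne_lit j _) hpure hw _ h rfl

theorem linked_of_polLE_block (he : e ∈ litBlocks j (LL n Q φ j).1)
    (he' : e' ∈ litBlocks j (LL n Q φ j).2) (hv : ∀ a ∈ e, a ∈ Val n (j + 1) v)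
    (hq : .lit j (!b) ∉ e) (hee' : PolLE (m + 3) e e') :
    Linked Q φ m j (Function.update v j b) := by
  obtain ⟨c, l, hl, d, rfl⟩ := mem_litBlocks.1 he
  obtain ⟨c', l', hl', d', rfl⟩ := mem_litBlocks.1 he'
  have hll' : PolLE m l l' := by
    obtain ⟨_, hcons, hdrop⟩ := hee'.of_cons
    obtain rfl := (List.cons.inj hcons).2
    rw [List.append_cons] at hdrop
    obtain ⟨_, hd, hdrop⟩ := hdrop.of_concat
    rw [List.append_cons] at hd
    obtain rfl := (List.append_inj' hd rfl).1
    obtain ⟨_, hdollar, hdrop⟩ := hdrop.of_concat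
    obtain rfl := (List.append_inj' hdollar rfl).1
    exact hdrop
  refine ⟨l, hl, l', hl', fun a ha ↦ ?_, hll'⟩
  have hae : a ∈ .lit j c :: (l ++ [.dollar, .lit j d]) :=
    List.mem_cons_of_mem _ (List.mem_append_left _ ha)
  exact mem_Val_update_iff.2 ⟨hv a hae, (LL_le_wordsOver j).1 hl a ha, ne_of_mem_of_not_mem hae hq⟩

theorem Linked.exists_of_succ (hQ : Q j = true) (h : Linked Q φ (m + 6) (j + 1) v) :
    ∃ b, Linked Q φ m j (Function.update v j b) := by
  obtain ⟨u, hu, u', hu', hv, huu'⟩ := h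
  rw [LL_succ_fst, mem_chainLang] at hu
  rw [LL_succ_snd_of_exists hQ] at hu'
  obtain ⟨s, hs, t, ht, rfl⟩ := mem_marked.1 hu'
  obtain ⟨b, ht⟩ : ∃ b, t ∈ chainLang (.hash j) (pureBlocks j b) := ht.elim (⟨_, ·⟩) (⟨_, ·⟩)
  obtain ⟨e, he, e', he', hqe, heu, hee'⟩ := hu.exists_polLE_block (m := m + 2)
    (fun _ ↦ hash_notMem_of_le (litBlocks_le_wordsOver (LL_le_wordsOver j).1))
    (fun _ ↦ hash_notMem_of_le (litBlocks_le_wordsOver (LL_le_wordsOver j).2))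
    dollar_cons_notMem_litBlocks (by simp) (hash_ne_lit j !b) (mem_chainLang.1 hs)
    (lit_not_notMem_dollar_cons ht) huu'
  exact ⟨b, linked_of_polLE_block he he' (fun a ha ↦ hv a (heu ha)) hqe hee'⟩

theorem Linked.forall_of_succ (hQ : Q j = false) (h : Linked Q φ (m + 6) (j + 1) v) (b : Bool) :
    Linked Q φ m j (Function.update v j b) := by
  obtain ⟨u, hu, u', hu', hv, huu'⟩ := h
  rw [LL_succ_fst, mem_chainLang] at hu
  rw [LL_succ_snd_of_forall hQ] at hu'
  obtain ⟨x, hx, _, hst, rfl⟩ := mem_marked.1 hu'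
  obtain ⟨s, hs, t, ht, rfl⟩ := mem_marked.1 hst
  obtain ⟨e, he, e', he', hqe, heu, hee'⟩ :
      ∃ e ∈ litBlocks j (LL n Q φ j).1, ∃ e' ∈ litBlocks j (LL n Q φ j).2,
        .lit j (!b) ∉ e ∧ e ⊆ u ∧ PolLE (m + 3) e e' := by
    have hM (e) : e ∈ litBlocks j (LL n Q φ j).1 → .hash j ∉ e :=
      hash_notMem_of_le (litBlocks_le_wordsOver (LL_le_wordsOver j).1)
    have hM' (e) : e ∈ litBlocks j (LL n Q φ j).2 → .hash j ∉ e :=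
      hash_notMem_of_le (litBlocks_le_wordsOver (LL_le_wordsOver j).2)
    have hN (e) (he : e ∈ pureBlocks j !b) : .hash j ∉ e ∧ .lit j (!b) ∈ e :=
      ⟨hash_notMem_of_le pureBlocks_le_wordsOver he, lit_mem_of_mem_pureBlocks he⟩
    rw [mem_chainLang] at hs
    cases b
    · exact hu.exists_polLE_block_left hM hM' append_dollar_notMem_litBlocks (by simp)
        (hash_ne_lit j _) (mem_chainLang.1 ht) hN hs (lit_not_notMem_dollar_cons hx) huu'
    · exact hu.exists_polLE_block_right hM hM' dollar_cons_notMem_litBlocks (by simp)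
        (hash_ne_lit j _) (mem_chainLang.1 hx) hN hs (lit_not_notMem_dollar_cons ht) huu'
  exact linked_of_polLE_block he he' (fun a ha ↦ hv a (heu ha)) hqe hee'

theorem forall_linked_iff_qTruth {i : ℕ} (hi : i ≤ n) :
    (∀ m, Linked Q φ m i v) ↔ QTruth n Q φ i v := by
  induction i generalizing v with
  | zero => exact (forall_congr' fun _ ↦ linked_zero_iff).trans (forall_const ℕ)
  | succ i ih =>
    rw [QTruth, dif_pos (Nat.lt_of_succ_le hi)]
    lift i to Fin n using hi
    simp only [← ih i.2.le]
    cases hQ : Q i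
    · rw [if_neg Bool.false_ne_true]
      exact ⟨fun h b m ↦ (h (m + 6)).forall_of_succ hQ b,
        fun h m ↦ linked_succ_of_forall hQ fun b ↦ h b m⟩
    · rw [if_pos rfl]
      refine ⟨fun h ↦ ?_, fun ⟨b, hb⟩ m ↦ linked_succ_of_exists hQ (hb m)⟩
      by_contra! hb
      choose k hk using hb
      obtain ⟨b, hb⟩ := (h (max (k true) (k false) + 6)).exists_of_succ hQ
      cases b
      exacts [hk _ (hb.of_le (le_max_right _ _)), hk _ (hb.of_le (le_max_left _ _))]

theorem mem_Val_of_mem_Bsub (ha : a ∈ Bsub n n) : a ∈ Val n n v := by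
  rcases a with k | k | k | _
  exacts [.inl k.2, .inl k.2, ha, ha]

end Reduction

/-- `Ψ` is true (being closed, its truth does not depend on the auxiliary assignment)
if and only if `L_Ψ = Lₙ` is not `ST[3/2]`-separable from `L'_Ψ = L'ₙ` (level `3/2`
of the Straubing-Thérien hierarchy is index `3` in half units). -/
theorem statement16 (n : ℕ) (Q : ℕ → Bool) (φ : List (List (Fin n × Bool))) :
    (∀ v : Fin n → Bool, QTruth n Q φ n v) ↔
      ¬ Separable (hlevel STbasis 3 (Letter n)) (LL n Q φ n).1 (LL n Q φ n).2 := by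
  have hlinked (m : ℕ) (v : Fin n → Bool) : Linked Q φ m n v ↔
      ∃ u ∈ (LL n Q φ n).1, ∃ u' ∈ (LL n Q φ n).2, PolLE m u u' := by
    refine ⟨fun ⟨u, hu, u', hu', _, h⟩ ↦ ⟨u, hu, u', hu', h⟩, fun ⟨u, hu, u', hu', h⟩ ↦
      ⟨u, hu, u', hu', fun a ha ↦ mem_Val_of_mem_Bsub ((LL_le_wordsOver n).1 hu a ha), h⟩⟩
  simp_rw [← forall_linked_iff_qTruth le_rfl, hlinked, forall_const,
    separable_hlevel_STbasis_three_iff, not_exists, not_forall, not_not, exists_prop]
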